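/- Let K ⊂ {(x,y) ∈ ℝ² : 0 < x ≤ y} be a compact set, let E := {ξ ∈ ℝ^{2×2} : (λ₁(ξ), λ₂(ξ)) ∈ K}, and let ξ ∈ int(E^{rc}). Then there exists a sequence of open sets (U_n)_{n≥1} which is an in-approximation of E and such that ξ ∈ U_1. -/

import Mathlib

open scoped BigOperators

/-- Square of the Frobenius norm of a 2×2 real matrix. -/
noncomputable def frobSq (ξ : Matrix (Fin 2) (Fin 2) ℝ) : ℝ := ∑ i, ∑ j, (ξ i j) ^ 2

/-- The Frobenius norm of a 2×2 real matrix. -/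
noncomputable def frobNorm (ξ : Matrix (Fin 2) (Fin 2) ℝ) : ℝ := Real.sqrt (frobSq ξ)

/-- The smallest singular value of a 2×2 real matrix. -/
noncomputable def lam1 (ξ : Matrix (Fin 2) (Fin 2) ℝ) : ℝ :=
  (Real.sqrt (frobSq ξ + 2 * |ξ.det|) - Real.sqrt (frobSq ξ - 2 * |ξ.det|)) / 2

/-- The largest singular value of a 2×2 real matrix. -/
noncomputable def lam2 (ξ : Matrix (Fin 2) (Fin 2) ℝ) : ℝ :=
  (Real.sqrt (frobSq ξ + 2 * |ξ.det|) + Real.sqrt (frobSq ξ - 2 * |ξ.det|)) / 2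

/-- A function on 2×2 matrices is rank one convex if it is convex along rank one segments. -/
def RankOneConvex (f : Matrix (Fin 2) (Fin 2) ℝ → ℝ) : Prop :=
  ∀ (ξ η : Matrix (Fin 2) (Fin 2) ℝ) (t : ℝ), t ∈ Set.Icc (0 : ℝ) 1 →
    (ξ - η).rank = 1 → f (t • ξ + (1 - t) • η) ≤ t * f ξ + (1 - t) * f η

/-- The rank one convex hull `E^{rc}` of a set of 2×2 matrices. -/
def rcHull (E : Set (Matrix (Fin 2) (Fin 2) ℝ)) : Set (Matrix (Fin 2) (Fin 2) ℝ) :=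
  {ξ | ∀ f : Matrix (Fin 2) (Fin 2) ℝ → ℝ,
    RankOneConvex f → (∀ η ∈ E, f η ≤ 0) → f ξ ≤ 0}

/-- The rank one convex hull `U^{rc}` of an open set of 2×2 matrices. -/
def rcHullOpen (U : Set (Matrix (Fin 2) (Fin 2) ℝ)) : Set (Matrix (Fin 2) (Fin 2) ℝ) :=
  {ξ | ∃ E : Set (Matrix (Fin 2) (Fin 2) ℝ), E ⊆ U ∧ IsCompact E ∧ ξ ∈ rcHull E}

/-- A function on 2×2 matrices is polyconvex if it is a convex function of (ξ, det ξ). -/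
def PolyconvexFun (f : Matrix (Fin 2) (Fin 2) ℝ → ℝ) : Prop :=
  ∃ g : Matrix (Fin 2) (Fin 2) ℝ × ℝ → ℝ,
    ConvexOn ℝ Set.univ g ∧ ∀ ξ, f ξ = g (ξ, ξ.det)

/-- The polyconvex hull `E^{pc}` of a set of 2×2 matrices. -/
def pcHull (E : Set (Matrix (Fin 2) (Fin 2) ℝ)) : Set (Matrix (Fin 2) (Fin 2) ℝ) :=
  {ξ | ∀ f : Matrix (Fin 2) (Fin 2) ℝ → ℝ,
    PolyconvexFun f → (∀ η ∈ E, f η ≤ 0) → f ξ ≤ 0}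

/-- The polyconvex hull `U^{pc}` of an open set of 2×2 matrices. -/
def pcHullOpen (U : Set (Matrix (Fin 2) (Fin 2) ℝ)) : Set (Matrix (Fin 2) (Fin 2) ℝ) :=
  {ξ | ∃ E : Set (Matrix (Fin 2) (Fin 2) ℝ), E ⊆ U ∧ IsCompact E ∧ ξ ∈ pcHull E}

/-- A set of 2×2 matrices is polyconvex. -/
def PolyconvexSet (A : Set (Matrix (Fin 2) (Fin 2) ℝ)) : Prop :=
  ∀ (ξ : Fin 5 → Matrix (Fin 2) (Fin 2) ℝ) (t : Fin 5 → ℝ),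
    (∀ i, ξ i ∈ A) → (∀ i, 0 ≤ t i) → (∑ i, t i) = 1 →
    (∑ i, t i * (ξ i).det) = (∑ i, t i • ξ i).det →
    (∑ i, t i • ξ i) ∈ A

/-- The polyconvex hull `Pco E`: the smallest polyconvex set containing `E`. -/
def Pco (E : Set (Matrix (Fin 2) (Fin 2) ℝ)) : Set (Matrix (Fin 2) (Fin 2) ℝ) :=
  ⋂₀ {A | PolyconvexSet A ∧ E ⊆ A}

/-- A set of 2×2 matrices is isotropic if it is invariant under orthogonal transformations. -/
def Isotropic (E : Set (Matrix (Fin 2) (Fin 2) ℝ)) : Prop :=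
  ∀ R S : Matrix (Fin 2) (Fin 2) ℝ, R * R.transpose = 1 → S * S.transpose = 1 → ∀ ξ ∈ E, R * ξ * S ∈ E

/-- The distance (w.r.t. the Frobenius norm) from a matrix to a set of matrices. -/
noncomputable def distE (ξ : Matrix (Fin 2) (Fin 2) ℝ) (E : Set (Matrix (Fin 2) (Fin 2) ℝ)) : ℝ :=
  sInf ((fun η => frobNorm (ξ - η)) '' E)

/-- The function `f_θ(x,y) = xy + θ(y-x)`. -/
def ftheta (θ : ℝ) (p : ℝ × ℝ) : ℝ := p.1 * p.2 + θ * (p.2 - p.1)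

/-- The gradient of a map `u : ℝ² → ℝ²` at `x`, as a 2×2 matrix. -/
noncomputable def gradMatrix (u : (Fin 2 → ℝ) → (Fin 2 → ℝ)) (x : Fin 2 → ℝ) :
    Matrix (Fin 2) (Fin 2) ℝ :=
  LinearMap.toMatrix' (fderiv ℝ u x).toLinearMap

/-!
Identify `ℝ²` with `ℂ` and write a matrix as `z ↦ p z + q z̄`. Its singular values are
`|‖p‖ - ‖q‖|` and `‖p‖ + ‖q‖`, and the polar decompositions of `p` and `q` exhibit it as
`a A + b B`, where `A`, `B` have rank one and `s A + t B` has singular values `|s|`, `|t|` up to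
order. Rank one convexity in `a` and then in `b` shows that the hull of `{λ₁ = x, λ₂ = y}` contains
`{λ₁ ≤ x, λ₂ ≤ y}`. As `λ₁ > 0` on `E`, it follows that `c E ⊆ int (E^{rc})` for `0 < c < 1`.
Taking hulls commutes with scaling, so `s E ⊆ int ((s' E)^{rc})` for `0 < s < s'`. Hence, for
`s n ↑ 1`, the sets `int ((s (n + 1) E)^{rc})`, cut down to small neighbourhoods of `E`, form an
in-approximation; `ξ` lies in the first one as soon as `s 1` is close enough to `1`.
-/

open Set Filter Topology
open scoped Pointwise

section Rank

variable {F : Type*} [Field F]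

theorem rank_lt_card_of_det_eq_zero {n : Type*} [Fintype n] [DecidableEq n] {M : Matrix n n F}
    (hM : M.det = 0) : M.rank < Fintype.card n := by
  have hlt : LinearMap.range (Matrix.toLin' M) < ⊤ :=
    LinearMap.range_lt_top_of_det_eq_zero (by rwa [LinearMap.det_toLin'])
  simpa using! Submodule.finrank_lt hlt.ne

theorem rank_ne_zero_of_ne_zero {m n : Type*} [Finite m] [Fintype n] {M : Matrix m n F}
    (hM : M ≠ 0) : M.rank ≠ 0 := by
  classical
  intro h
  rw [Matrix.rank, Submodule.finrank_eq_zero, LinearMap.range_eq_bot] at h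
  exact hM (Matrix.toLin'.map_eq_zero_iff.1 h)

theorem rank_eq_one_of_det_eq_zero {M : Matrix (Fin 2) (Fin 2) F} (hM : M ≠ 0)
    (hdet : M.det = 0) : M.rank = 1 := by
  have hlt := rank_lt_card_of_det_eq_zero hdet
  have hne := rank_ne_zero_of_ne_zero hM
  rw [Fintype.card_fin] at hlt
  lia

theorem rank_smul_of_ne_zero {m n : Type*} [Fintype n] {c : F} (hc : c ≠ 0)
    (M : Matrix m n F) : (c • M).rank = M.rank :=
  M.rank_smul_of_mem_nonZeroDivisors (mem_nonZeroDivisors_of_ne_zero hc)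

end Rank

section RankOneConvexHull

variable {f : Matrix (Fin 2) (Fin 2) ℝ → ℝ} {E E' : Set (Matrix (Fin 2) (Fin 2) ℝ)}

theorem RankOneConvex.comp_smul (hf : RankOneConvex f) {c : ℝ} (hc : c ≠ 0) :
    RankOneConvex fun ξ => f (c • ξ) := by
  intro ξ η t ht hrank
  have hrank' : (c • ξ - c • η).rank = 1 := by rw [← smul_sub, rank_smul_of_ne_zero hc, hrank]
  simpa only [smul_add, smul_comm c] using hf (c • ξ) (c • η) t ht hrank'

theorem RankOneConvex.convexOn_line (hf : RankOneConvex f) {D : Matrix (Fin 2) (Fin 2) ℝ}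
    (hD : D.rank = 1) (C : Matrix (Fin 2) (Fin 2) ℝ) :
    ConvexOn ℝ univ fun t : ℝ => f (t • D + C) := by
  refine ⟨convex_univ, fun s _ t _ a b ha hb hab => ?_⟩
  obtain rfl : b = 1 - a := by linarith
  rcases eq_or_ne s t with rfl | hst
  · simp [← add_mul]
  · have hrank : (s • D + C - (t • D + C)).rank = 1 := by
      rw [add_sub_add_right_eq_sub, ← sub_smul, rank_smul_of_ne_zero (sub_ne_zero.2 hst), hD]
    have hcomb : (a • s + (1 - a) • t) • D + C
        = a • (s • D + C) + (1 - a) • (t • D + C) := by module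
    beta_reduce
    rw [hcomb]
    exact hf _ _ a ⟨ha, by linarith⟩ hrank

theorem RankOneConvex.nonpos_of_abs_le (hf : RankOneConvex f) {C D : Matrix (Fin 2) (Fin 2) ℝ}
    (hD : D.rank = 1) {r t : ℝ} (ht : |t| ≤ r) (hneg : f (-r • D + C) ≤ 0)
    (hpos : f (r • D + C) ≤ 0) : f (t • D + C) ≤ 0 :=
  ((hf.convexOn_line hD C).le_max_of_mem_Icc (mem_univ (-r)) (mem_univ r) (abs_le.1 ht)).trans
    (max_le hneg hpos)

theorem rcHull_mono (h : E ⊆ E') : rcHull E ⊆ rcHull E' :=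
  fun _ hξ f hf hE' => hξ f hf fun η hη => hE' η (h hη)

theorem rcHull_subset_rcHullOpen (hE : IsCompact E) (h : E ⊆ E') : rcHull E ⊆ rcHullOpen E' :=
  fun _ hξ => ⟨E, h, hE, hξ⟩

theorem smul_mem_rcHull_smul {c : ℝ} (hc : c ≠ 0) {ξ : Matrix (Fin 2) (Fin 2) ℝ}
    (hξ : ξ ∈ rcHull E) : c • ξ ∈ rcHull (c • E) :=
  fun _ hf hE => hξ _ (hf.comp_smul hc) fun _ hη => hE _ (smul_mem_smul_set hη)

theorem rcHull_smul {c : ℝ} (hc : c ≠ 0) (E : Set (Matrix (Fin 2) (Fin 2) ℝ)) :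
    rcHull (c • E) = c • rcHull E := by
  ext ξ
  rw [mem_smul_set_iff_inv_smul_mem₀ hc]
  constructor <;> intro hξ
  · simpa only [inv_smul_smul₀ hc] using smul_mem_rcHull_smul (inv_ne_zero hc) hξ
  · simpa only [smul_inv_smul₀ hc] using smul_mem_rcHull_smul hc hξ

theorem mem_interior_rcHull_smul_iff {c : ℝ} (hc : c ≠ 0) {ξ : Matrix (Fin 2) (Fin 2) ℝ} :
    ξ ∈ interior (rcHull (c • E)) ↔ c⁻¹ • ξ ∈ interior (rcHull E) := by
  rw [rcHull_smul hc, interior_smul₀ hc, mem_smul_set_iff_inv_smul_mem₀ hc]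

end RankOneConvexHull

section SingularValues

/-- The matrix of the real linear map `z ↦ p z + q z̄` of `ℂ` in the basis `1, I`; `p` and `q` are
its Wirtinger derivatives, in terms of which the singular values have a simple form. -/
def wirtingerMatrix (p q : ℂ) : Matrix (Fin 2) (Fin 2) ℝ :=
  !![p.re + q.re, q.im - p.im; p.im + q.im, p.re - q.re]

theorem exists_eq_wirtingerMatrix (ξ : Matrix (Fin 2) (Fin 2) ℝ) :
    ∃ p q : ℂ, ξ = wirtingerMatrix p q := by
  refine ⟨⟨(ξ 0 0 + ξ 1 1) / 2, (ξ 1 0 - ξ 0 1) / 2⟩,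
    ⟨(ξ 0 0 - ξ 1 1) / 2, (ξ 1 0 + ξ 0 1) / 2⟩, ?_⟩
  ext i j
  fin_cases i <;> fin_cases j <;> simp [wirtingerMatrix] <;> ring

theorem smul_wirtingerMatrix (c : ℝ) (p q : ℂ) :
    c • wirtingerMatrix p q = wirtingerMatrix (c * p) (c * q) := by
  ext i j
  fin_cases i <;> fin_cases j <;> simp [wirtingerMatrix] <;> ring

theorem wirtingerMatrix_add (p q p' q' : ℂ) :
    wirtingerMatrix p q + wirtingerMatrix p' q' = wirtingerMatrix (p + p') (q + q') := by
  ext i j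
  fin_cases i <;> fin_cases j <;> simp [wirtingerMatrix] <;> ring

theorem frobSq_wirtingerMatrix (p q : ℂ) :
    frobSq (wirtingerMatrix p q) = 2 * (‖p‖ ^ 2 + ‖q‖ ^ 2) := by
  simp only [frobSq, wirtingerMatrix, Fin.sum_univ_two, Complex.sq_norm, Complex.normSq_apply,
    Matrix.of_apply, Matrix.cons_val', Matrix.cons_val_zero, Matrix.cons_val_one,
    Matrix.cons_val_fin_one]
  ring

theorem det_wirtingerMatrix (p q : ℂ) : (wirtingerMatrix p q).det = ‖p‖ ^ 2 - ‖q‖ ^ 2 := by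
  rw [wirtingerMatrix, Matrix.det_fin_two_of, Complex.sq_norm, Complex.sq_norm,
    Complex.normSq_apply, Complex.normSq_apply]
  ring

theorem sqrt_frobSq_add_two_mul_abs_det (p q : ℂ) :
    √(frobSq (wirtingerMatrix p q) + 2 * |(wirtingerMatrix p q).det|) = 2 * max ‖p‖ ‖q‖ := by
  rw [frobSq_wirtingerMatrix, det_wirtingerMatrix,
    Real.sqrt_eq_iff_eq_sq (by positivity) (by positivity)]
  rcases le_total ‖p‖ ‖q‖ with h | h
  · rw [max_eq_right h, abs_of_nonpos (sub_nonpos.2 (by gcongr))]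
    ring
  · rw [max_eq_left h, abs_of_nonneg (sub_nonneg.2 (by gcongr))]
    ring

theorem sqrt_frobSq_sub_two_mul_abs_det (p q : ℂ) :
    √(frobSq (wirtingerMatrix p q) - 2 * |(wirtingerMatrix p q).det|) = 2 * min ‖p‖ ‖q‖ := by
  have hsq : frobSq (wirtingerMatrix p q) - 2 * |(wirtingerMatrix p q).det|
      = (2 * min ‖p‖ ‖q‖) ^ 2 := by
    rw [frobSq_wirtingerMatrix, det_wirtingerMatrix]
    rcases le_total ‖p‖ ‖q‖ with h | h
    · rw [min_eq_left h, abs_of_nonpos (sub_nonpos.2 (by gcongr))]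
      ring
    · rw [min_eq_right h, abs_of_nonneg (sub_nonneg.2 (by gcongr))]
      ring
  rw [hsq, Real.sqrt_sq (by positivity)]

theorem lam1_wirtingerMatrix (p q : ℂ) : lam1 (wirtingerMatrix p q) = |‖p‖ - ‖q‖| := by
  rw [lam1, sqrt_frobSq_add_two_mul_abs_det, sqrt_frobSq_sub_two_mul_abs_det,
    ← max_sub_min_eq_abs' ‖p‖ ‖q‖]
  ring

theorem lam2_wirtingerMatrix (p q : ℂ) : lam2 (wirtingerMatrix p q) = ‖p‖ + ‖q‖ := by
  rw [lam2, sqrt_frobSq_add_two_mul_abs_det, sqrt_frobSq_sub_two_mul_abs_det,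
    ← max_add_min ‖p‖ ‖q‖]
  ring

theorem lam1_nonneg (ξ : Matrix (Fin 2) (Fin 2) ℝ) : 0 ≤ lam1 ξ := by
  obtain ⟨p, q, rfl⟩ := exists_eq_wirtingerMatrix ξ
  rw [lam1_wirtingerMatrix]
  exact abs_nonneg _

theorem lam1_le_lam2 (ξ : Matrix (Fin 2) (Fin 2) ℝ) : lam1 ξ ≤ lam2 ξ := by
  obtain ⟨p, q, rfl⟩ := exists_eq_wirtingerMatrix ξ
  rw [lam1_wirtingerMatrix, lam2_wirtingerMatrix]
  simpa only [abs_norm] using abs_sub ‖p‖ ‖q‖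

theorem lam1_smul (c : ℝ) (ξ : Matrix (Fin 2) (Fin 2) ℝ) : lam1 (c • ξ) = |c| * lam1 ξ := by
  obtain ⟨p, q, rfl⟩ := exists_eq_wirtingerMatrix ξ
  simp only [smul_wirtingerMatrix, lam1_wirtingerMatrix, norm_mul, Complex.norm_real,
    Real.norm_eq_abs, ← mul_sub, abs_mul, abs_abs]

theorem lam2_smul (c : ℝ) (ξ : Matrix (Fin 2) (Fin 2) ℝ) : lam2 (c • ξ) = |c| * lam2 ξ := by
  obtain ⟨p, q, rfl⟩ := exists_eq_wirtingerMatrix ξ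
  simp only [smul_wirtingerMatrix, lam2_wirtingerMatrix, norm_mul, Complex.norm_real,
    Real.norm_eq_abs, ← mul_add]

theorem frobSq_eq_lam1_sq_add_lam2_sq (ξ : Matrix (Fin 2) (Fin 2) ℝ) :
    frobSq ξ = lam1 ξ ^ 2 + lam2 ξ ^ 2 := by
  obtain ⟨p, q, rfl⟩ := exists_eq_wirtingerMatrix ξ
  rw [frobSq_wirtingerMatrix, lam1_wirtingerMatrix, lam2_wirtingerMatrix, sq_abs]
  ring

theorem continuous_frobSq : Continuous frobSq := by
  unfold frobSq
  fun_prop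

theorem continuous_frobNorm : Continuous frobNorm :=
  Real.continuous_sqrt.comp continuous_frobSq

theorem continuous_lam1 : Continuous lam1 := by
  have := continuous_frobSq
  unfold lam1
  fun_prop

theorem continuous_lam2 : Continuous lam2 := by
  have := continuous_frobSq
  unfold lam2
  fun_prop

/-- A pair `A = w ⊗ x`, `B = w' ⊗ x'` of rank one matrices built from two orthonormal bases `w, w'`
and `x, x'`, as in a singular value decomposition. Only the resulting singular values of the
combinations `s A + t B` are recorded, not the bases. -/
structure IsSingularPair (A B : Matrix (Fin 2) (Fin 2) ℝ) : Prop where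
  rank_left : A.rank = 1
  rank_right : B.rank = 1
  lam1_eq (s t : ℝ) : lam1 (s • A + t • B) = min |s| |t|
  lam2_eq (s t : ℝ) : lam2 (s • A + t • B) = max |s| |t|

theorem rank_wirtingerMatrix_of_norm_eq {p q : ℂ} (hp : p ≠ 0) (hpq : ‖p‖ = ‖q‖) :
    (wirtingerMatrix p q).rank = 1 := by
  refine rank_eq_one_of_det_eq_zero (fun h => ?_) (by rw [det_wirtingerMatrix, hpq, sub_self])
  have hfrob := frobSq_wirtingerMatrix p q
  rw [h, hpq] at hfrob
  have hq : ‖q‖ = 0 := by simpa [frobSq] using hfrob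
  exact hp (norm_eq_zero.1 (hpq.trans hq))

theorem abs_abs_add_sub_abs_sub {R : Type*} [CommRing R] [LinearOrder R]
    [IsStrictOrderedRing R] (s t : R) : |(|s + t| - |t - s|)| = 2 * min |s| |t| := by
  grind

theorem abs_add_add_abs_sub {R : Type*} [CommRing R] [LinearOrder R]
    [IsStrictOrderedRing R] (s t : R) : |s + t| + |t - s| = 2 * max |s| |t| := by
  grind

theorem isSingularPair_wirtingerMatrix {u v : ℂ} (hu : ‖u‖ = 1) (hv : ‖v‖ = 1) :
    IsSingularPair (wirtingerMatrix (u / 2) (-v / 2)) (wirtingerMatrix (u / 2) (v / 2)) := by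
  have hu0 : u / 2 ≠ 0 := div_ne_zero (norm_ne_zero_iff.1 (by simp [hu])) two_ne_zero
  have hcomb (s t : ℝ) : s • wirtingerMatrix (u / 2) (-v / 2) + t • wirtingerMatrix (u / 2) (v / 2)
      = wirtingerMatrix (((s + t) / 2 : ℝ) * u) (((t - s) / 2 : ℝ) * v) := by
    rw [smul_wirtingerMatrix, smul_wirtingerMatrix, wirtingerMatrix_add]
    congr 1 <;> push_cast <;> ring
  refine ⟨rank_wirtingerMatrix_of_norm_eq hu0 (by simp [hu, hv]),
    rank_wirtingerMatrix_of_norm_eq hu0 (by simp [hu, hv]), fun s t => ?_, fun s t => ?_⟩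
  · rw [hcomb, lam1_wirtingerMatrix]
    simp only [norm_mul, hu, hv, Complex.norm_real, Real.norm_eq_abs, abs_div, abs_two, mul_one]
    rw [← sub_div, abs_div, abs_two, abs_abs_add_sub_abs_sub]
    ring
  · rw [hcomb, lam2_wirtingerMatrix]
    simp only [norm_mul, hu, hv, Complex.norm_real, Real.norm_eq_abs, abs_div, abs_two, mul_one]
    rw [← add_div, abs_add_add_abs_sub]
    ring

theorem exists_isSingularPair (ξ : Matrix (Fin 2) (Fin 2) ℝ) :
    ∃ A B, IsSingularPair A B ∧ ∃ a b : ℝ, ξ = a • A + b • B ∧ |a| = lam1 ξ ∧ |b| = lam2 ξ := by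
  obtain ⟨p, q, rfl⟩ := exists_eq_wirtingerMatrix ξ
  refine ⟨_, _, isSingularPair_wirtingerMatrix (Complex.norm_exp_ofReal_mul_I p.arg)
    (Complex.norm_exp_ofReal_mul_I q.arg), ‖p‖ - ‖q‖, ‖p‖ + ‖q‖, ?_,
    (lam1_wirtingerMatrix p q).symm, ?_⟩
  · rw [smul_wirtingerMatrix, smul_wirtingerMatrix, wirtingerMatrix_add]
    congr 1
    · conv_lhs => rw [← Complex.norm_mul_exp_arg_mul_I p]
      push_cast
      ring
    · conv_lhs => rw [← Complex.norm_mul_exp_arg_mul_I q]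
      push_cast
      ring
  · rw [lam2_wirtingerMatrix, abs_of_nonneg (by positivity)]

theorem mem_rcHull_of_lam_le {ξ η : Matrix (Fin 2) (Fin 2) ℝ} (h₁ : lam1 ξ ≤ lam1 η)
    (h₂ : lam2 ξ ≤ lam2 η) : ξ ∈ rcHull {ζ | lam1 ζ = lam1 η ∧ lam2 ζ = lam2 η} := by
  obtain ⟨A, B, hAB, a, b, hξ, ha, hb⟩ := exists_isSingularPair ξ
  intro f hf hE
  have corner (s t : ℝ) (hs : |s| = lam1 η) (ht : |t| = lam2 η) : f (s • A + t • B) ≤ 0 := by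
    refine hE _ ⟨?_, ?_⟩
    · rw [hAB.lam1_eq, hs, ht, min_eq_left (lam1_le_lam2 η)]
    · rw [hAB.lam2_eq, hs, ht, max_eq_right (lam1_le_lam2 η)]
  have abs_lam1 : |lam1 η| = lam1 η := abs_of_nonneg (lam1_nonneg η)
  have abs_lam2 : |lam2 η| = lam2 η := abs_of_nonneg ((lam1_nonneg η).trans (lam1_le_lam2 η))
  have edge (s : ℝ) (hs : |s| = lam1 η) : f (s • A + b • B) ≤ 0 := by
    rw [add_comm]
    apply hf.nonpos_of_abs_le hAB.rank_right (hb.trans_le h₂) <;> rw [add_comm]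
    · exact corner s _ hs (by rw [abs_neg, abs_lam2])
    · exact corner s _ hs abs_lam2
  rw [hξ]
  exact hf.nonpos_of_abs_le hAB.rank_left (ha.trans_le h₁) (edge _ (by rw [abs_neg, abs_lam1]))
    (edge _ abs_lam1)

theorem smul_mem_interior_rcHull {η : Matrix (Fin 2) (Fin 2) ℝ} (hη : 0 < lam1 η) {c : ℝ}
    (hc : |c| < 1) :
    c • η ∈ interior (rcHull {ζ | lam1 ζ = lam1 η ∧ lam2 ζ = lam2 η}) := by
  have hopen : IsOpen {ζ | lam1 ζ < lam1 η ∧ lam2 ζ < lam2 η} :=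
    (isOpen_lt continuous_lam1 continuous_const).inter (isOpen_lt continuous_lam2 continuous_const)
  refine interior_maximal (fun ζ hζ => mem_rcHull_of_lam_le hζ.1.le hζ.2.le) hopen ⟨?_, ?_⟩
  · rw [lam1_smul]
    exact mul_lt_of_lt_one_left hη hc
  · rw [lam2_smul]
    exact mul_lt_of_lt_one_left (hη.trans_le (lam1_le_lam2 η)) hc

theorem smul_setOf_lam_mem_subset_interior_rcHull {K : Set (ℝ × ℝ)} (hK : ∀ p ∈ K, 0 < p.1) {c : ℝ}
    (hc : |c| < 1) :
    c • {ξ | (lam1 ξ, lam2 ξ) ∈ K} ⊆ interior (rcHull {ξ | (lam1 ξ, lam2 ξ) ∈ K}) := by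
  rintro _ ⟨η, hη, rfl⟩
  refine interior_mono (rcHull_mono fun ζ hζ => ?_) (smul_mem_interior_rcHull (hK _ hη) hc)
  rwa [mem_ofPred_eq, hζ.1, hζ.2]

end SingularValues

section FrobeniusDistance

open scoped Matrix.Norms.Frobenius

theorem norm_eq_frobNorm (ξ : Matrix (Fin 2) (Fin 2) ℝ) : ‖ξ‖ = frobNorm ξ := by
  simp [Matrix.frobenius_norm_def, frobNorm, frobSq, Real.sqrt_eq_rpow]

theorem distE_eq_infDist (ξ : Matrix (Fin 2) (Fin 2) ℝ) (E : Set (Matrix (Fin 2) (Fin 2) ℝ)) :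
    distE ξ E = Metric.infDist ξ E := by
  simp only [distE, Metric.infDist_eq_iInf, sInf_image', dist_eq_norm, norm_eq_frobNorm]

theorem continuous_distE (E : Set (Matrix (Fin 2) (Fin 2) ℝ)) : Continuous (distE · E) := by
  simp only [distE_eq_infDist]
  exact Metric.continuous_infDist_pt E

theorem distE_smul_le {E : Set (Matrix (Fin 2) (Fin 2) ℝ)} {η : Matrix (Fin 2) (Fin 2) ℝ}
    (hη : η ∈ E) (c : ℝ) : distE (c • η) E ≤ |1 - c| * frobNorm η := by
  have hsub : c • η - η = (c - 1) • η := by module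
  calc distE (c • η) E ≤ dist (c • η) η := by
        rw [distE_eq_infDist]
        exact Metric.infDist_le_dist_of_mem hη
    _ = |1 - c| * frobNorm η := by
        rw [dist_eq_norm, hsub, norm_smul, norm_eq_frobNorm, Real.norm_eq_abs, abs_sub_comm]

theorem isCompact_setOf_lam_mem {K : Set (ℝ × ℝ)} (hK : IsCompact K) :
    IsCompact {ξ | (lam1 ξ, lam2 ξ) ∈ K} := by
  obtain ⟨C, hC⟩ := hK.bddAbove_image (f := fun p : ℝ × ℝ => √(p.1 ^ 2 + p.2 ^ 2)) (by fun_prop)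
  refine Metric.isCompact_of_isClosed_isBounded
    (hK.isClosed.preimage (continuous_lam1.prodMk continuous_lam2))
    (isBounded_iff_forall_norm_le.2 ⟨C, fun ξ hξ => ?_⟩)
  rw [norm_eq_frobNorm, frobNorm, frobSq_eq_lam1_sq_add_lam2_sq]
  exact hC ⟨_, hξ, rfl⟩

end FrobeniusDistance

section InApproximation

/-- The sequence of open sets `U` is an in-approximation of `E`; the convergence
`sup_{ξ ∈ U n} dist(ξ, E) → 0` is spelled out with `ε`, which avoids suprema of unbounded sets. -/
structure IsInApproximation (U : ℕ → Set (Matrix (Fin 2) (Fin 2) ℝ))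
    (E : Set (Matrix (Fin 2) (Fin 2) ℝ)) : Prop where
  isOpen (n : ℕ) : IsOpen (U n)
  subset_rcHullOpen (n : ℕ) : U n ⊆ rcHullOpen (U (n + 1))
  distE_le (r : ℝ) (hr : 0 < r) : ∃ N : ℕ, ∀ n ≥ N, ∀ η ∈ U n, distE η E ≤ r

/-- The candidate in-approximation of `E` along scales `s n ↑ 1`: the `n`-th set is the interior of
the hull of `s (n + 1) • E`, cut down to a neighbourhood of `E` of size `(1 - s n) * C`. The shift
in the index makes the neighbourhood large enough to contain `s n • E`. -/
def scaledApproximation (E : Set (Matrix (Fin 2) (Fin 2) ℝ)) (s : ℕ → ℝ) (C : ℝ) (n : ℕ) :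
    Set (Matrix (Fin 2) (Fin 2) ℝ) :=
  interior (rcHull (s (n + 1) • E)) ∩ {ζ | distE ζ E < (1 - s n) * C}

variable {E : Set (Matrix (Fin 2) (Fin 2) ℝ)}

theorem smul_subset_interior_rcHull_smul
    (hsmul : ∀ c ∈ Ioo (0 : ℝ) 1, c • E ⊆ interior (rcHull E)) {s t : ℝ} (hs : 0 < s)
    (hst : s < t) : s • E ⊆ interior (rcHull (t • E)) := by
  have ht : 0 < t := hs.trans hst
  rintro _ ⟨η, hη, rfl⟩
  rw [mem_interior_rcHull_smul_iff ht.ne', smul_smul]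
  exact hsmul _ ⟨by positivity, (inv_mul_lt_one₀ ht).2 hst⟩ (smul_mem_smul_set hη)

theorem isInApproximation_scaledApproximation (hE : IsCompact E)
    (hsmul : ∀ c ∈ Ioo (0 : ℝ) 1, c • E ⊆ interior (rcHull E)) {s : ℕ → ℝ} (hs : StrictMono s)
    (hs01 : ∀ n, s n ∈ Ioo (0 : ℝ) 1) (hslim : Tendsto s atTop (𝓝 1)) {C : ℝ}
    (hC : ∀ η ∈ E, frobNorm η < C) : IsInApproximation (scaledApproximation E s C) E where
  isOpen n := isOpen_interior.inter (isOpen_lt (continuous_distE E) continuous_const)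
  subset_rcHullOpen n := by
    refine (inter_subset_left.trans interior_subset).trans
      (rcHull_subset_rcHullOpen (hE.smul _) (subset_inter
        (smul_subset_interior_rcHull_smul hsmul (hs01 _).1 (hs (Nat.lt_succ_self _))) ?_))
    rintro _ ⟨η, hη, rfl⟩
    have hpos : 0 < 1 - s (n + 1) := sub_pos.2 (hs01 (n + 1)).2
    calc distE (s (n + 1) • η) E ≤ |1 - s (n + 1)| * frobNorm η := distE_smul_le hη _
      _ = (1 - s (n + 1)) * frobNorm η := by rw [abs_of_pos hpos]
      _ < (1 - s (n + 1)) * C := mul_lt_mul_of_pos_left (hC η hη) hpos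
  distE_le r hr := by
    have hlim : Tendsto (fun n => (1 - s n) * C) atTop (𝓝 0) := by
      simpa using (hslim.const_sub 1).mul_const C
    obtain ⟨N, hN⟩ := eventually_atTop.1 (hlim.eventually_lt_const hr)
    exact ⟨N, fun n hn η hη => (hη.2.trans (hN n hn)).le⟩

theorem exists_inv_smul_mem_of_isOpen {V : Type*} [AddCommGroup V] [Module ℝ V]
    [TopologicalSpace V] [ContinuousSMul ℝ V] {O : Set V} (hO : IsOpen O) {v : V} (hv : v ∈ O) :
    ∃ a ∈ Ico (0 : ℝ) 1, ∀ t ∈ Ioo a 1, t⁻¹ • v ∈ O := by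
  have hcont : ContinuousAt (fun t : ℝ => t⁻¹ • v) 1 :=
    (continuousAt_inv₀ one_ne_zero).smul continuousAt_const
  have hnhds : ∀ᶠ t in 𝓝[<] (1 : ℝ), t⁻¹ • v ∈ O :=
    (hcont.eventually_mem (hO.mem_nhds (by simpa using hv))).filter_mono nhdsWithin_le_nhds
  exact (mem_nhdsLT_iff_exists_mem_Ico_Ioo_subset zero_lt_one).1 hnhds

theorem exists_inApproximation_mem_first_general (hE : IsCompact E)
    (hsmul : ∀ c ∈ Ioo (0 : ℝ) 1, c • E ⊆ interior (rcHull E))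
    {ξ : Matrix (Fin 2) (Fin 2) ℝ} (hξ : ξ ∈ interior (rcHull E)) :
    ∃ U : ℕ → Set (Matrix (Fin 2) (Fin 2) ℝ), IsInApproximation U E ∧ ξ ∈ U 0 := by
  obtain ⟨a, ha, hscale⟩ := exists_inv_smul_mem_of_isOpen isOpen_interior hξ
  obtain ⟨s, hs, hsa, hslim⟩ := exists_seq_strictMono_tendsto' ha.2
  have hs01 (n : ℕ) : s n ∈ Ioo (0 : ℝ) 1 := ⟨ha.1.trans_lt (hsa n).1, (hsa n).2⟩
  obtain ⟨C₀, hC₀⟩ := hE.bddAbove_image continuous_frobNorm.continuousOn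
  obtain ⟨C, hCE, hCξ⟩ : ∃ C, C₀ < C ∧ distE ξ E / (1 - s 0) < C :=
    ((eventually_gt_atTop _).and (eventually_gt_atTop _)).exists
  refine ⟨scaledApproximation E s C, isInApproximation_scaledApproximation hE hsmul hs hs01 hslim
    fun η hη => (hC₀ (mem_image_of_mem _ hη)).trans_lt hCE, ?_, ?_⟩
  · rw [zero_add, mem_interior_rcHull_smul_iff (hs01 1).1.ne']
    exact hscale _ (hsa 1)
  · rwa [mem_ofPred_eq, mul_comm, ← div_lt_iff₀ (sub_pos.2 (hs01 0).2)]

end InApproximation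

/-- if `ξ ∈ int E^{rc}` then there is an in-approximation of `E` whose first
set contains `ξ`. -/
theorem exists_inApproximation_mem_first (K : Set (ℝ × ℝ)) (hKc : IsCompact K)
    (hKsub : K ⊆ {p : ℝ × ℝ | 0 < p.1 ∧ p.1 ≤ p.2})
    (E : Set (Matrix (Fin 2) (Fin 2) ℝ)) (hE : E = {ξ | (lam1 ξ, lam2 ξ) ∈ K})
    (ξ : Matrix (Fin 2) (Fin 2) ℝ) (hξ : ξ ∈ interior (rcHull E)) :
    ∃ U : ℕ → Set (Matrix (Fin 2) (Fin 2) ℝ),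
      (∀ n, IsOpen (U n)) ∧
      (∀ n, U n ⊆ rcHullOpen (U (n + 1))) ∧
      (∀ r : ℝ, 0 < r → ∃ N : ℕ, ∀ n ≥ N, ∀ η ∈ U n, distE η E ≤ r) ∧
      ξ ∈ U 0 := by
  subst hE
  obtain ⟨U, hU, hξU⟩ := exists_inApproximation_mem_first_general (isCompact_setOf_lam_mem hKc)
    (fun c hc => smul_setOf_lam_mem_subset_interior_rcHull (fun p hp => (hKsub hp).1)
      ((abs_of_pos hc.1).trans_lt hc.2)) hξ
  exact ⟨U, hU.isOpen, hU.subset_rcHullOpen, hU.distE_le, hξU⟩
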